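/- Let d ≥ 2 and let 𝒮 be a weighted step set satisfying the standing assumptions, with A, Q, B the Laurent polynomials in z_1,…,z_{d−1} defined by A = Σ_{i∈𝒮, i_d=−1} w_i z_1^{i_1}⋯z_{d−1}^{i_{d−1}}, Q and B analogously over i_d = 0 and i_d = 1; set S̄(z) = z_d A + Q + z_d^{−1} B. For 1 ≤ j ≤ d−1 let B_j, A'_j, B'_j be the Laurent polynomials (not involving z_j; A'_j, B'_j also not involving z_d) with S̄ = (z_j + z_j^{−1})B_j + Q_j, A = (z_j + z_j^{−1})A'_j + A''_j, B = (z_j + z_j^{−1})B'_j + B''_j. Let p ∈ ℂ^d satisfy: p_j ∈ {1,−1} for 1 ≤ j ≤ d−1; p_d ∉ {0,1}; A(p) ≠ 0, B(p) ≠ 0, p_d² = B(p)/A(p); S̄(p) ≠ 0; and p_j·B_j(p) ≠ 0 for all 1 ≤ j ≤ d−1 (all Laurent polynomials evaluated at the relevant coordinates of p). Define, on a neighbourhood of 0 in ℝ^d: ũ(θ) = ∏_{j=1}^{d−1}(1 + p_j e^{iθ_j}) · (1 − p_d² e^{2iθ_d} · A(p_1e^{iθ_1},…,p_{d−1}e^{iθ_{d−1}})/B(p_1e^{iθ_1},…,p_{d−1}e^{iθ_{d−1}}))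 · (1 − p_d e^{iθ_d})^{−1}; g̃(θ) = log S̄(p) − log S̄(p_1e^{iθ_1},…,p_de^{iθ_d}) (a branch with g̃(0)=0); g̲̃ = g̃ − (1/2)θᵀ g̃''(0) θ; and the operator ℋ = −(S̄(p)/2)·( Σ_{j=1}^{d−1} (p_j B_j(p))^{−1} ∂_j² + p_d·B(p)^{−1} ∂_d² ). Then −(1/2)·( ℋ(ũ)(0) + ℋ²(ũ·g̲̃)(0)/4 ) = [ S̄(p)·∏_{j=1}^{d−1}(1+p_j) / (1−p_d) ] · [ 1/(A(p)·p_d·(1−p_d)) + Σ_{j=1}^{d−1} (1−p_j)/(2 p_j B_j(p)) · ( A'_j(p)/A(p) − B'_j(p)/B(p) ) ]. -/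

import Mathlib

open Finset

/-- The `k`-th partial derivative of a function `f : ℝ^d → ℂ`. -/
noncomputable def pderiv' (d : ℕ) (k : Fin d) (f : (Fin d → ℝ) → ℂ) :
    (Fin d → ℝ) → ℂ :=
  fun z => deriv (fun s : ℝ => f (Function.update z k s)) (z k)

/-! Write `σ` for `S̄` restricted to the torus `θ ↦ (p_1 e^{iθ_1}, …, p_d e^{iθ_d})`, `n` for the
last coordinate. The middle factor of `ũ` is `∂ₙσ` up to a nonvanishing factor, so `ũ = ∂ₙσ · f`
near `0`. The condition `p_d² = B(p)/A(p)` and the reflection symmetries, which make `A`, `Q` and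
`B` even in each `θ_j`, make `0` a critical point of `σ`; moreover `∂ₖ∂ₙσ(0) = 0` for `k ≠ n`, and
`ℋ` is scaled so that its coefficient `cₙ` of `∂ₙ²` satisfies `cₙ ∂ₙ²σ(0) = σ(0)`.

Since `ũ` vanishes at `0` and `g̲̃` vanishes there to third order, `ℋ²(ũ g̲̃)(0)` only sees first
derivatives of `ũ` and third derivatives of `g̃`. Differentiating `e^{g̃} σ = const` turns the
latter into third derivatives of `σ`, and `ℋ²(ũ g̲̃)(0)/4 = -f(0) ℋ(∂ₙσ)(0)`. This cancels the
term of `ℋ(ũ)(0)` involving `f(0)`, and what is left is `2 σ(0) ∂ₙf(0)`. The sum over `j` in the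
claim contributes nothing: for `p_j = ±1` either `1 - p_j = 0` or `∏ (1 + p_j) = 0`.
-/

open Filter Function
open scoped Topology ContDiff

local notation "∂[" k "]" => pderiv' _ k

section PartialDerivatives

variable {d : ℕ} {f g : (Fin d → ℝ) → ℂ} {x : Fin d → ℝ}

theorem hasDerivAt_comp_update (hf : DifferentiableAt ℝ f x) (k : Fin d) :
    HasDerivAt (fun s : ℝ => f (update x k s)) (fderiv ℝ f x (Pi.single k 1)) (x k) := by
  have hf' : HasFDerivAt f (fderiv ℝ f x) (update x k (x k)) := by
    rw [update_eq_self]; exact hf.hasFDerivAt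
  exact hf'.comp_hasDerivAt (x k) (hasDerivAt_update x k (x k))

theorem pderiv_eq_fderiv (hf : DifferentiableAt ℝ f x) (k : Fin d) :
    ∂[k] f x = fderiv ℝ f x (Pi.single k 1) :=
  (hasDerivAt_comp_update hf k).deriv

theorem hasDerivAt_comp_update_pderiv (hf : DifferentiableAt ℝ f x) (k : Fin d) :
    HasDerivAt (fun s : ℝ => f (update x k s)) (∂[k] f x) (x k) :=
  pderiv_eq_fderiv hf k ▸ hasDerivAt_comp_update hf k

theorem eventually_contDiffAt_nat (hf : ContDiffAt ℝ ∞ f x) (m : ℕ) :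
    ∀ᶠ y in 𝓝 x, ContDiffAt ℝ m f y :=
  (hf.of_le (by exact_mod_cast le_top)).eventually (by simp)

theorem eventually_differentiableAt (hf : ContDiffAt ℝ ∞ f x) :
    ∀ᶠ y in 𝓝 x, DifferentiableAt ℝ f y :=
  (eventually_contDiffAt_nat hf 1).mono fun _ hy => hy.differentiableAt (by simp)

theorem contDiffAt_pderiv {m n : WithTop ℕ∞} (hf : ContDiffAt ℝ n f x) (hmn : m + 1 ≤ n)
    (k : Fin d) : ContDiffAt ℝ m (∂[k] f) x := by
  have hfderiv : ContDiffAt ℝ m (fun y => fderiv ℝ f y (Pi.single k 1)) x :=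
    (hf.fderiv_right hmn).clm_apply contDiffAt_const
  refine hfderiv.congr_of_eventuallyEq ?_
  have hone : ContDiffAt ℝ 1 f x := hf.of_le (le_trans (by simp) hmn)
  filter_upwards [hone.eventually (by simp)] with y hy
  exact pderiv_eq_fderiv (hy.differentiableAt (by simp)) k

theorem contDiffAt_infty_pderiv (hf : ContDiffAt ℝ ∞ f x) (k : Fin d) :
    ContDiffAt ℝ ∞ (∂[k] f) x :=
  contDiffAt_pderiv hf (by simp) k

theorem differentiableAt_pderiv (hf : ContDiffAt ℝ 2 f x) (k : Fin d) :
    DifferentiableAt ℝ (∂[k] f) x :=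
  (contDiffAt_pderiv hf (m := 1) (by norm_num) k).differentiableAt (by simp)

theorem pderiv_congr (h : f =ᶠ[𝓝 x] g) (k : Fin d) : ∂[k] f =ᶠ[𝓝 x] ∂[k] g := by
  filter_upwards [h.eventuallyEq_nhds] with y hy
  have hupdate : Tendsto (fun s : ℝ => update y k s) (𝓝 (y k)) (𝓝 y) := by
    simpa only [update_eq_self] using (hasDerivAt_update y k (y k)).continuousAt.tendsto
  exact EventuallyEq.deriv_eq (hupdate.eventually hy)

theorem pderiv_const (c : ℂ) (k : Fin d) : ∂[k] (fun _ => c) = fun _ => 0 := by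
  funext x
  simp [pderiv']

theorem pderiv_const_mul (c : ℂ) (f : (Fin d → ℝ) → ℂ) (k : Fin d) :
    ∂[k] (fun y => c * f y) = fun y => c * ∂[k] f y :=
  funext fun _ => deriv_const_mul_field c

theorem pderiv_sub_const (c : ℂ) (f : (Fin d → ℝ) → ℂ) (k : Fin d) :
    ∂[k] (fun y => f y - c) = ∂[k] f :=
  funext fun _ => deriv_sub_const c

theorem pderiv_add (hf : DifferentiableAt ℝ f x) (hg : DifferentiableAt ℝ g x) (k : Fin d) :
    ∂[k] (fun y => f y + g y) x = ∂[k] f x + ∂[k] g x :=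
  ((hasDerivAt_comp_update_pderiv hf k).add (hasDerivAt_comp_update_pderiv hg k)).deriv

theorem pderiv_sub (hf : DifferentiableAt ℝ f x) (hg : DifferentiableAt ℝ g x) (k : Fin d) :
    ∂[k] (fun y => f y - g y) x = ∂[k] f x - ∂[k] g x :=
  ((hasDerivAt_comp_update_pderiv hf k).sub (hasDerivAt_comp_update_pderiv hg k)).deriv

theorem pderiv_mul (hf : DifferentiableAt ℝ f x) (hg : DifferentiableAt ℝ g x) (k : Fin d) :
    ∂[k] (fun y => f y * g y) x = ∂[k] f x * g x + f x * ∂[k] g x := by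
  have hmul := (hasDerivAt_comp_update_pderiv hf k).mul (hasDerivAt_comp_update_pderiv hg k)
  simp only [update_eq_self] at hmul
  exact hmul.deriv

theorem pderiv_sum {ι : Type*} {s : Finset ι} {F : ι → (Fin d → ℝ) → ℂ}
    (hF : ∀ i ∈ s, DifferentiableAt ℝ (F i) x) (k : Fin d) :
    ∂[k] (fun y => ∑ i ∈ s, F i y) x = ∑ i ∈ s, ∂[k] (F i) x :=
  (HasDerivAt.fun_sum fun i hi => hasDerivAt_comp_update_pderiv (hF i hi) k).deriv

theorem pderiv_pderiv_eq_fderiv_fderiv (hf : ContDiffAt ℝ 2 f x) (j k : Fin d) :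
    ∂[j] (∂[k] f) x = fderiv ℝ (fderiv ℝ f) x (Pi.single j 1) (Pi.single k 1) := by
  have hfderiv : DifferentiableAt ℝ (fderiv ℝ f) x :=
    (hf.fderiv_right (m := 1) (by norm_num)).differentiableAt (by simp)
  have hk : ∂[k] f =ᶠ[𝓝 x] fun y => fderiv ℝ f y (Pi.single k 1) :=
    (hf.eventually (by simp)).mono fun y hy =>
      pderiv_eq_fderiv (hy.differentiableAt (by simp)) k
  rw [(pderiv_congr hk j).eq_of_nhds,
    pderiv_eq_fderiv (hfderiv.clm_apply (differentiableAt_const _)) j,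
    fderiv_clm_apply hfderiv (differentiableAt_const _)]
  simp

theorem pderiv_comm (hf : ContDiffAt ℝ 2 f x) (j k : Fin d) :
    ∂[j] (∂[k] f) x = ∂[k] (∂[j] f) x := by
  rw [pderiv_pderiv_eq_fderiv_fderiv hf, pderiv_pderiv_eq_fderiv_fderiv hf]
  exact (hf.isSymmSndFDerivAt (by simp)).eq _ _

theorem pderiv_pderiv_mul (hf : ContDiffAt ℝ 2 f x) (hg : ContDiffAt ℝ 2 g x) (k : Fin d) :
    ∂[k] (∂[k] (fun y => f y * g y)) x =
      ∂[k] (∂[k] f) x * g x + 2 * (∂[k] f x * ∂[k] g x) + f x * ∂[k] (∂[k] g) x := by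
  have hmul : ∂[k] (fun y => f y * g y) =ᶠ[𝓝 x] fun y => ∂[k] f y * g y + f y * ∂[k] g y := by
    filter_upwards [hf.eventually (by simp), hg.eventually (by simp)] with y hfy hgy
    exact pderiv_mul (hfy.differentiableAt (by simp)) (hgy.differentiableAt (by simp)) k
  have hf₀ : DifferentiableAt ℝ f x := hf.differentiableAt (by simp)
  have hg₀ : DifferentiableAt ℝ g x := hg.differentiableAt (by simp)
  have hf₁ := differentiableAt_pderiv hf k
  have hg₁ := differentiableAt_pderiv hg k
  rw [(pderiv_congr hmul k).eq_of_nhds, pderiv_add (hf₁.fun_mul hg₀) (hf₀.fun_mul hg₁),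
    pderiv_mul hf₁ hg₀, pderiv_mul hf₀ hg₁]
  ring

theorem pderiv_zero_eq_zero_of_even {j : Fin d}
    (h : ∀ s : ℝ, f (update 0 j (-s)) = f (update 0 j s)) : ∂[j] f 0 = 0 := by
  have hneg := deriv_comp_neg (fun s : ℝ => f (update 0 j s)) 0
  simp only [h, neg_zero] at hneg
  exact self_eq_neg.mp hneg

theorem apply_update_of_dependsOn_compl {k : Fin d} (hg : DependsOn g {k}ᶜ) (y : Fin d → ℝ)
    (s : ℝ) : g (update y k s) = g y :=
  hg fun _ hi => update_of_ne hi s y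

theorem pderiv_mul_of_dependsOn_compl {k : Fin d} (hg : DependsOn g {k}ᶜ) :
    ∂[k] (fun y => f y * g y) = fun y => ∂[k] f y * g y := by
  funext y
  simp only [pderiv', apply_update_of_dependsOn_compl hg, deriv_mul_const_field]

end PartialDerivatives

section WeightedLaplacian

variable {d : ℕ} {f g u h : (Fin d → ℝ) → ℂ} {x : Fin d → ℝ}

/-- The constant-coefficient operator `∑ k, c k ∂ₖ²`, of which `ℋ` is an instance. -/
noncomputable def weightedLaplacian (c : Fin d → ℂ) (f : (Fin d → ℝ) → ℂ) (x : Fin d → ℝ) : ℂ :=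
  ∑ k, c k * ∂[k] (∂[k] f) x

/-- The bilinear form `∑ k, c k ∂ₖf ∂ₖg` measuring the failure of `weightedLaplacian c` to be a
derivation. -/
noncomputable def carreDuChamp (c : Fin d → ℂ) (f g : (Fin d → ℝ) → ℂ) (x : Fin d → ℝ) : ℂ :=
  ∑ k, c k * (∂[k] f x * ∂[k] g x)

variable (c : Fin d → ℂ)

theorem weightedLaplacian_congr (hfg : f =ᶠ[𝓝 x] g) :
    weightedLaplacian c f =ᶠ[𝓝 x] weightedLaplacian c g := by
  have hk : ∀ᶠ y in 𝓝 x, ∀ k, ∂[k] (∂[k] f) y = ∂[k] (∂[k] g) y :=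
    eventually_all.mpr fun k => pderiv_congr (pderiv_congr hfg k) k
  filter_upwards [hk] with y hy
  simp only [weightedLaplacian, hy]

theorem contDiffAt_weightedLaplacian (hf : ContDiffAt ℝ ∞ f x) :
    ContDiffAt ℝ ∞ (weightedLaplacian c f) x :=
  ContDiffAt.sum fun k _ => contDiffAt_const.mul
    (contDiffAt_infty_pderiv (contDiffAt_infty_pderiv hf k) k)

theorem contDiffAt_carreDuChamp (hf : ContDiffAt ℝ ∞ f x) (hg : ContDiffAt ℝ ∞ g x) :
    ContDiffAt ℝ ∞ (carreDuChamp c f g) x :=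
  ContDiffAt.sum fun k _ => contDiffAt_const.mul
    ((contDiffAt_infty_pderiv hf k).mul (contDiffAt_infty_pderiv hg k))

theorem weightedLaplacian_mul_ite (n : Fin d) (r a : ℂ) (b : Fin d → ℂ)
    (f : (Fin d → ℝ) → ℂ) (x : Fin d → ℝ) :
    weightedLaplacian (fun k => r * if k = n then a else b k) f x =
      r * ((∑ k ∈ univ.erase n, b k * ∂[k] (∂[k] f) x) + a * ∂[n] (∂[n] f) x) := by
  rw [weightedLaplacian, ← sum_erase_add univ _ (mem_univ n), mul_add, mul_sum]
  refine congrArg₂ _ (sum_congr rfl fun k hk => ?_) (by simp only [if_true, mul_assoc])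
  simp only [if_neg (ne_of_mem_erase hk), mul_assoc]

theorem weightedLaplacian_sum {ι : Type*} {s : Finset ι} {F : ι → (Fin d → ℝ) → ℂ}
    (hF : ∀ i ∈ s, ContDiffAt ℝ 2 (F i) x) :
    weightedLaplacian c (fun y => ∑ i ∈ s, F i y) x = ∑ i ∈ s, weightedLaplacian c (F i) x := by
  have hk (k : Fin d) :
      ∂[k] (∂[k] fun y => ∑ i ∈ s, F i y) x = ∑ i ∈ s, ∂[k] (∂[k] (F i)) x := by
    have hsum : ∂[k] (fun y => ∑ i ∈ s, F i y) =ᶠ[𝓝 x] fun y => ∑ i ∈ s, ∂[k] (F i) y := by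
      have hnear : ∀ᶠ y in 𝓝 x, ∀ i ∈ s, ContDiffAt ℝ 2 (F i) y :=
        (eventually_all_finset s).mpr fun i hi => (hF i hi).eventually (by simp)
      filter_upwards [hnear] with y hy
      exact pderiv_sum (fun i hi => (hy i hi).differentiableAt (by simp)) k
    rw [(pderiv_congr hsum k).eq_of_nhds,
      pderiv_sum fun i hi => differentiableAt_pderiv (hF i hi) k]
  simp only [weightedLaplacian, hk, mul_sum]
  exact sum_comm

theorem weightedLaplacian_add (hf : ContDiffAt ℝ 2 f x) (hg : ContDiffAt ℝ 2 g x) :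
    weightedLaplacian c (fun y => f y + g y) x =
      weightedLaplacian c f x + weightedLaplacian c g x := by
  simpa [Fin.sum_univ_two] using
    weightedLaplacian_sum c (s := univ) (F := ![f, g]) (x := x)
      (by simp [Fin.forall_fin_two, hf, hg])

theorem weightedLaplacian_const_mul (a : ℂ) (f : (Fin d → ℝ) → ℂ) (x : Fin d → ℝ) :
    weightedLaplacian c (fun y => a * f y) x = a * weightedLaplacian c f x := by
  simp only [weightedLaplacian, pderiv_const_mul, mul_sum]
  exact sum_congr rfl fun k _ => mul_left_comm ..

theorem weightedLaplacian_mul (hf : ContDiffAt ℝ 2 f x) (hg : ContDiffAt ℝ 2 g x) :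
    weightedLaplacian c (fun y => f y * g y) x =
      weightedLaplacian c f x * g x + 2 * carreDuChamp c f g x + f x * weightedLaplacian c g x := by
  simp only [weightedLaplacian, carreDuChamp, pderiv_pderiv_mul hf hg, mul_sum, sum_mul,
    ← sum_add_distrib]
  exact sum_congr rfl fun k _ => by ring

theorem pderiv_weightedLaplacian (hf : ContDiffAt ℝ ∞ f x) (j : Fin d) :
    ∂[j] (weightedLaplacian c f) x = weightedLaplacian c (∂[j] f) x := by
  have hcomm (k : Fin d) : ∂[j] (∂[k] (∂[k] f)) x = ∂[k] (∂[k] (∂[j] f)) x := by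
    have hfk : ∂[j] (∂[k] f) =ᶠ[𝓝 x] ∂[k] (∂[j] f) :=
      (eventually_contDiffAt_nat hf 2).mono fun y hy => pderiv_comm hy j k
    rw [pderiv_comm (contDiffAt_infty.mp (contDiffAt_infty_pderiv hf k) 2),
      (pderiv_congr hfk k).eq_of_nhds]
  have hdiff (k : Fin d) : DifferentiableAt ℝ (∂[k] (∂[k] f)) x :=
    (contDiffAt_infty_pderiv (contDiffAt_infty_pderiv hf k) k).differentiableAt (by simp)
  have hsum := pderiv_sum (s := univ) (fun k _ => (hdiff k).const_mul (c k)) j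
  simp only [pderiv_const_mul, hcomm] at hsum
  exact hsum

theorem weightedLaplacian_sq_mul (hu : ContDiffAt ℝ ∞ u x) (hh : ContDiffAt ℝ ∞ h x)
    (hu₀ : u x = 0) (hh₀ : h x = 0) (hh₁ : ∀ k, ∂[k] h x = 0)
    (hh₂ : ∀ j k, ∂[j] (∂[k] h) x = 0) :
    weightedLaplacian c (weightedLaplacian c fun y => u y * h y) x =
      4 * ∑ k, c k * (∂[k] u x * weightedLaplacian c (∂[k] h) x) := by
  have smooth₂ {φ : (Fin d → ℝ) → ℂ} (hφ : ContDiffAt ℝ ∞ φ x) : ContDiffAt ℝ 2 φ x :=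
    contDiffAt_infty.mp hφ 2
  have hΔu := contDiffAt_weightedLaplacian c hu
  have hΔh := contDiffAt_weightedLaplacian c hh
  have hΓ := contDiffAt_carreDuChamp c hu hh
  have hleibniz : weightedLaplacian c (fun y => u y * h y) =ᶠ[𝓝 x] fun y =>
      weightedLaplacian c u y * h y + 2 * carreDuChamp c u h y + u y * weightedLaplacian c h y := by
    filter_upwards [eventually_contDiffAt_nat hu 2, eventually_contDiffAt_nat hh 2] with y huy hhy
    exact weightedLaplacian_mul c huy hhy
  have hfirst : weightedLaplacian c (fun y => weightedLaplacian c u y * h y) x = 0 := by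
    rw [weightedLaplacian_mul c (smooth₂ hΔu) (smooth₂ hh)]
    simp [carreDuChamp, weightedLaplacian, hh₀, hh₁, hh₂]
  have hmiddle : weightedLaplacian c (carreDuChamp c u h) x =
      ∑ k, c k * (∂[k] u x * weightedLaplacian c (∂[k] h) x) := by
    have hu₁ (k : Fin d) := smooth₂ (contDiffAt_infty_pderiv hu k)
    have hh₁' (k : Fin d) := smooth₂ (contDiffAt_infty_pderiv hh k)
    unfold carreDuChamp
    rw [weightedLaplacian_sum c fun k _ => contDiffAt_const.mul ((hu₁ k).mul (hh₁' k))]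
    refine sum_congr rfl fun k _ => ?_
    rw [weightedLaplacian_const_mul, weightedLaplacian_mul c (hu₁ k) (hh₁' k)]
    simp [carreDuChamp, hh₁, hh₂]
  have hlast : weightedLaplacian c (fun y => u y * weightedLaplacian c h y) x =
      2 * ∑ k, c k * (∂[k] u x * weightedLaplacian c (∂[k] h) x) := by
    rw [weightedLaplacian_mul c (smooth₂ hu) (smooth₂ hΔh), hu₀]
    simp only [carreDuChamp, pderiv_weightedLaplacian c hh]
    simp [weightedLaplacian, hh₂]
  rw [(weightedLaplacian_congr c hleibniz).eq_of_nhds,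
    weightedLaplacian_add c (smooth₂ ((hΔu.mul hh).add (contDiffAt_const.mul hΓ)))
      (smooth₂ (hu.mul hΔh)),
    weightedLaplacian_add c (smooth₂ (hΔu.mul hh)) (smooth₂ (contDiffAt_const.mul hΓ)),
    weightedLaplacian_const_mul, hfirst, hmiddle, hlast]
  ring

end WeightedLaplacian

section LogBranch

variable {d : ℕ} {g σ : (Fin d → ℝ) → ℂ} {x : Fin d → ℝ} {K : ℂ}

theorem pderiv_mul_add_pderiv_eventuallyEq_zero (hg : ContDiffAt ℝ ∞ g x)
    (hσ : ContDiffAt ℝ ∞ σ x) (hgσ : ∀ᶠ y in 𝓝 x, Complex.exp (g y) * σ y = K) (k : Fin d) :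
    (fun y => ∂[k] g y * σ y + ∂[k] σ y) =ᶠ[𝓝 x] fun _ => 0 := by
  have hconst : ∂[k] (fun y => Complex.exp (g y) * σ y) =ᶠ[𝓝 x] fun _ => 0 :=
    pderiv_const (d := d) K k ▸ pderiv_congr hgσ k
  filter_upwards [hconst, eventually_differentiableAt hg, eventually_differentiableAt hσ]
    with y hy hgy hσy
  have hprod := ((hasDerivAt_comp_update_pderiv hgy k).cexp.mul
    (hasDerivAt_comp_update_pderiv hσy k)).deriv
  simp only [update_eq_self] at hprod
  have hfactor : Complex.exp (g y) * (∂[k] g y * σ y + ∂[k] σ y) = 0 := by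
    rw [mul_add, ← mul_assoc, ← hprod]
    exact hy
  exact (mul_eq_zero.mp hfactor).resolve_left (Complex.exp_ne_zero _)

variable (hg : ContDiffAt ℝ ∞ g x) (hσ : ContDiffAt ℝ ∞ σ x)
  (hgσ : ∀ᶠ y in 𝓝 x, Complex.exp (g y) * σ y = K) (hσ₀ : σ x ≠ 0) (hσ₁ : ∀ k, ∂[k] σ x = 0)

include hg hσ hgσ hσ₀ hσ₁

theorem pderiv_eq_zero_of_exp_mul_eq_const (k : Fin d) : ∂[k] g x = 0 := by
  have h := (pderiv_mul_add_pderiv_eventuallyEq_zero hg hσ hgσ k).eq_of_nhds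
  rw [hσ₁, add_zero] at h
  exact (mul_eq_zero.mp h).resolve_right hσ₀

theorem weightedLaplacian_pderiv_of_exp_mul_eq_const (c : Fin d → ℂ) (k : Fin d) :
    weightedLaplacian c (∂[k] g) x = -weightedLaplacian c (∂[k] σ) x / σ x := by
  have hg₁ := contDiffAt_infty.mp (contDiffAt_infty_pderiv hg k) 2
  have hσ₁' := contDiffAt_infty.mp (contDiffAt_infty_pderiv hσ k) 2
  have hσ₂ := contDiffAt_infty.mp hσ 2
  have hzero := (weightedLaplacian_congr c
    (pderiv_mul_add_pderiv_eventuallyEq_zero hg hσ hgσ k)).eq_of_nhds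
  rw [weightedLaplacian_add c (hg₁.mul hσ₂) hσ₁', weightedLaplacian_mul c hg₁ hσ₂,
    pderiv_eq_zero_of_exp_mul_eq_const hg hσ hgσ hσ₀ hσ₁] at hzero
  simp only [carreDuChamp, hσ₁, weightedLaplacian, pderiv_const, mul_zero, sum_const_zero,
    zero_mul, add_zero] at hzero
  rw [eq_div_iff hσ₀]
  exact eq_neg_of_add_eq_zero_left hzero

end LogBranch

section HessianRemainder

variable {d : ℕ} {g : (Fin d → ℝ) → ℂ}

theorem hasDerivAt_update_apply_ofReal (x : Fin d → ℝ) (k a : Fin d) :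
    HasDerivAt (fun s : ℝ => ((update x k s a : ℝ) : ℂ)) (if a = k then 1 else 0) (x k) := by
  have h := (hasDerivAt_pi.mp (hasDerivAt_update x k (x k)) a).ofReal_comp
  simpa only [Pi.single_apply, apply_ite Complex.ofReal, Complex.ofReal_one,
    Complex.ofReal_zero] using h

theorem pderiv_quadraticForm {M : Fin d → Fin d → ℂ} (hM : ∀ a b, M a b = M b a) (k : Fin d) :
    ∂[k] (fun θ => 1 / 2 * ∑ a, ∑ b, (θ a : ℂ) * M a b * (θ b : ℂ)) =
      fun θ => ∑ a, M a k * (θ a : ℂ) := by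
  funext x
  have hcoord := hasDerivAt_update_apply_ofReal x k
  have hquad := (HasDerivAt.fun_sum (u := univ) fun a _ => HasDerivAt.fun_sum (u := univ) fun b _ =>
    ((hcoord a).mul_const (M a b)).mul (hcoord b)).const_mul (1 / 2 : ℂ)
  refine hquad.deriv.trans ?_
  have hsymm (a : Fin d) : M k a = M a k := hM k a
  simp only [update_eq_self, ite_mul, one_mul, zero_mul, mul_ite, mul_one, mul_zero,
    sum_add_distrib, sum_ite_eq', mem_univ, if_true]
  rw [sum_comm]
  simp only [sum_ite_eq', mem_univ, if_true, hsymm, mul_comm (x _ : ℂ)]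
  ring

theorem pderiv_linearForm (m : Fin d → ℂ) (k : Fin d) :
    ∂[k] (fun θ => ∑ a, m a * (θ a : ℂ)) = fun _ => m k := by
  funext x
  have hlin := HasDerivAt.fun_sum (u := univ) fun a _ =>
    (hasDerivAt_update_apply_ofReal x k a).const_mul (m a)
  refine hlin.deriv.trans ?_
  simp

/-- The function `g̲ = g - ½ θᵀ g''(0) θ`: what remains of the phase `g` once the quadratic form of
its Hessian at `0` is removed. -/
noncomputable def hessianRemainder (g : (Fin d → ℝ) → ℂ) (θ : Fin d → ℝ) : ℂ :=
  g θ - 1 / 2 * ∑ a, ∑ b, (θ a : ℂ) * ∂[a] (∂[b] g) 0 * (θ b : ℂ)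

theorem contDiff_ofReal_apply (a : Fin d) : ContDiff ℝ ∞ fun θ : Fin d → ℝ => (θ a : ℂ) :=
  Complex.ofRealCLM.contDiff.comp (contDiff_apply ℝ ℝ a)

theorem contDiff_quadraticForm (M : Fin d → Fin d → ℂ) :
    ContDiff ℝ ∞ fun θ : Fin d → ℝ => 1 / 2 * ∑ a, ∑ b, (θ a : ℂ) * M a b * (θ b : ℂ) :=
  contDiff_const.mul <| ContDiff.sum fun a _ => ContDiff.sum fun b _ =>
    ((contDiff_ofReal_apply a).mul contDiff_const).mul (contDiff_ofReal_apply b)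

theorem hessianRemainder_zero : hessianRemainder g 0 = g 0 := by
  simp [hessianRemainder]

variable (hg : ContDiffAt ℝ ∞ g 0)

include hg

theorem contDiffAt_hessianRemainder : ContDiffAt ℝ ∞ (hessianRemainder g) 0 :=
  hg.sub (contDiff_quadraticForm _).contDiffAt

theorem pderiv_hessianRemainder (k : Fin d) :
    ∂[k] (hessianRemainder g) =ᶠ[𝓝 0]
      fun θ => ∂[k] g θ - ∑ a, ∂[a] (∂[k] g) 0 * (θ a : ℂ) := by
  have hquad := pderiv_quadraticForm
    (fun a b => pderiv_comm (contDiffAt_infty.mp hg 2) a b) k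
  filter_upwards [eventually_differentiableAt hg] with θ hθ
  rw [← congrFun hquad θ]
  exact pderiv_sub hθ ((contDiff_quadraticForm _).differentiable (by simp) θ) k

theorem pderiv_pderiv_hessianRemainder (j k : Fin d) :
    ∂[j] (∂[k] (hessianRemainder g)) =ᶠ[𝓝 0]
      fun θ => ∂[j] (∂[k] g) θ - ∂[j] (∂[k] g) 0 := by
  refine (pderiv_congr (pderiv_hessianRemainder hg k) j).trans ?_
  have hlin : ContDiff ℝ ∞ fun θ : Fin d → ℝ => ∑ a, ∂[a] (∂[k] g) 0 * (θ a : ℂ) :=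
    ContDiff.sum fun a _ => contDiff_const.mul (contDiff_ofReal_apply a)
  filter_upwards [eventually_differentiableAt (contDiffAt_infty_pderiv hg k)] with θ hθ
  rw [pderiv_sub hθ (hlin.differentiable (by simp) θ), pderiv_linearForm]

theorem pderiv_hessianRemainder_zero (k : Fin d) : ∂[k] (hessianRemainder g) 0 = ∂[k] g 0 := by
  simp [(pderiv_hessianRemainder hg k).eq_of_nhds]

theorem pderiv_pderiv_hessianRemainder_zero (j k : Fin d) :
    ∂[j] (∂[k] (hessianRemainder g)) 0 = 0 := by
  simp [(pderiv_pderiv_hessianRemainder hg j k).eq_of_nhds]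

theorem weightedLaplacian_pderiv_hessianRemainder_zero (c : Fin d → ℂ) (k : Fin d) :
    weightedLaplacian c (∂[k] (hessianRemainder g)) 0 = weightedLaplacian c (∂[k] g) 0 := by
  refine sum_congr rfl fun l _ => ?_
  rw [(pderiv_congr (pderiv_pderiv_hessianRemainder hg l k) l).eq_of_nhds, pderiv_sub_const]

end HessianRemainder

theorem weightedLaplacian_add_weightedLaplacian_sq_div_four {d : ℕ} {n : Fin d} {c : Fin d → ℂ}
    {σ g f u : (Fin d → ℝ) → ℂ}
    (hσ : ContDiffAt ℝ ∞ σ 0) (hσ₀ : σ 0 ≠ 0) (hσ₁ : ∀ k, ∂[k] σ 0 = 0)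
    (hσn : ∀ k ≠ n, ∂[k] (∂[n] σ) 0 = 0) (hcn : c n * ∂[n] (∂[n] σ) 0 = σ 0)
    (hg : ContDiffAt ℝ ∞ g 0) (hg₀ : g 0 = 0) {K : ℂ}
    (hgσ : ∀ᶠ θ in 𝓝 0, Complex.exp (g θ) * σ θ = K)
    (hf : ContDiffAt ℝ ∞ f 0) (hu : u =ᶠ[𝓝 0] fun θ => ∂[n] σ θ * f θ) :
    weightedLaplacian c u 0 +
        weightedLaplacian c (weightedLaplacian c fun θ => u θ * hessianRemainder g θ) 0 / 4 =
      2 * σ 0 * ∂[n] f 0 := by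
  have hσn' := contDiffAt_infty_pderiv hσ n
  have husmooth : ContDiffAt ℝ ∞ u 0 := (hσn'.mul hf).congr_of_eventuallyEq hu
  have hu₀ : u 0 = 0 := by rw [hu.eq_of_nhds, hσ₁, zero_mul]
  have hu₁ (k : Fin d) : ∂[k] u 0 = ∂[k] (∂[n] σ) 0 * f 0 := by
    rw [(pderiv_congr hu k).eq_of_nhds, pderiv_mul (hσn'.differentiableAt (by simp))
      (hf.differentiableAt (by simp)), hσ₁, zero_mul, add_zero]
  have hsum_n (t : Fin d → ℂ) :
      ∑ k, c k * (∂[k] (∂[n] σ) 0 * t k) = σ 0 * t n := by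
    rw [sum_eq_single n (fun k _ hk => by simp [hσn k hk]) (by simp), ← mul_assoc, hcn]
  have hsecond : weightedLaplacian c u 0 =
      weightedLaplacian c (∂[n] σ) 0 * f 0 + 2 * (σ 0 * ∂[n] f 0) := by
    rw [(weightedLaplacian_congr c hu).eq_of_nhds,
      weightedLaplacian_mul c (contDiffAt_infty.mp hσn' 2) (contDiffAt_infty.mp hf 2), hσ₁ n]
    simp only [carreDuChamp, hsum_n, zero_mul, add_zero]
  have hfourth : weightedLaplacian c (weightedLaplacian c fun θ => u θ * hessianRemainder g θ) 0 =
      4 * (σ 0 * (f 0 * weightedLaplacian c (∂[n] g) 0)) := by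
    rw [weightedLaplacian_sq_mul c husmooth (contDiffAt_hessianRemainder hg) hu₀
      (by rw [hessianRemainder_zero, hg₀])
      (fun k => by rw [pderiv_hessianRemainder_zero hg,
        pderiv_eq_zero_of_exp_mul_eq_const hg hσ hgσ hσ₀ hσ₁])
      (pderiv_pderiv_hessianRemainder_zero hg)]
    simp only [weightedLaplacian_pderiv_hessianRemainder_zero hg, hu₁, mul_assoc, hsum_n]
  rw [hsecond, hfourth, weightedLaplacian_pderiv_of_exp_mul_eq_const hg hσ hgσ hσ₀ hσ₁]
  field_simp
  ring

section Torus

variable {d : ℕ} {n j k : Fin d} {p : Fin d → ℂ} {θ : Fin d → ℝ}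

/-- The point `(p_1 e^{iθ_1}, …, p_d e^{iθ_d})` of the torus through `p`. -/
noncomputable def torusPoint (p : Fin d → ℂ) (θ : Fin d → ℝ) (k : Fin d) : ℂ :=
  p k * Complex.exp (Complex.I * (θ k : ℂ))

theorem torusPoint_zero (p : Fin d → ℂ) : torusPoint p 0 = p := by
  ext k
  simp [torusPoint]

theorem torusPoint_ne_zero (hp : p k ≠ 0) (θ : Fin d → ℝ) : torusPoint p θ k ≠ 0 :=
  mul_ne_zero hp (Complex.exp_ne_zero _)

theorem torusPoint_update_of_ne (h : k ≠ j) (p : Fin d → ℂ) (θ : Fin d → ℝ) (s : ℝ) :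
    torusPoint p (update θ j s) k = torusPoint p θ k := by
  simp only [torusPoint, update_of_ne h]

theorem torusPoint_sq (p : Fin d → ℂ) (θ : Fin d → ℝ) (k : Fin d) :
    torusPoint p θ k ^ 2 = p k ^ 2 * Complex.exp (2 * Complex.I * (θ k : ℂ)) := by
  rw [torusPoint, mul_pow, ← Complex.exp_nat_mul, mul_assoc 2]
  rfl

theorem torusPoint_update_neg (hp : p j = 1 ∨ p j = -1) (s : ℝ) :
    torusPoint p (update θ j (-s)) =
      update (torusPoint p (update θ j s)) j (torusPoint p (update θ j s) j)⁻¹ := by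
  have hinv : (p j)⁻¹ = p j := by rcases hp with h | h <;> simp [h, inv_neg]
  ext k
  by_cases hk : k = j
  · subst hk
    simp [torusPoint, hinv, ← Complex.exp_neg, mul_comm]
  · rw [update_of_ne hk, torusPoint_update_of_ne hk, torusPoint_update_of_ne hk]

theorem hasDerivAt_torusPoint_update (p : Fin d → ℂ) (θ : Fin d → ℝ) (k : Fin d) :
    HasDerivAt (fun s : ℝ => torusPoint p (update θ k s) k)
      (Complex.I * torusPoint p θ k) (θ k) := by
  have h := (((hasDerivAt_update_apply_ofReal θ k k).const_mul Complex.I).cexp).const_mul (p k)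
  simp only [update_eq_self, if_true, mul_one] at h
  exact h.congr_deriv (by rw [torusPoint]; ring)

theorem contDiff_torusPoint_zpow (p : Fin d → ℂ) (k : Fin d) (m : ℤ) :
    ContDiff ℝ ∞ fun θ => torusPoint p θ k ^ m := by
  simp only [torusPoint, mul_zpow, ← Complex.exp_int_mul]
  exact contDiff_const.mul
    (contDiff_const.mul (contDiff_const.mul (contDiff_ofReal_apply k))).cexp

theorem contDiff_torusPoint (p : Fin d → ℂ) (k : Fin d) :
    ContDiff ℝ ∞ fun θ => torusPoint p θ k := by
  simpa only [zpow_one] using contDiff_torusPoint_zpow p k 1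

end Torus

section StepSymbol

variable {d : ℕ} {n : Fin d} {p : Fin d → ℂ} {a q b : (Fin d → ℝ) → ℂ}

/-- A function independent of `θ_n`, smooth at `0` and critical there: the behaviour of the
coefficients `A`, `Q`, `B` along the torus through `p`. -/
structure IsTransverse (n : Fin d) (a : (Fin d → ℝ) → ℂ) : Prop where
  contDiffAt : ContDiffAt ℝ ∞ a 0
  dependsOn : DependsOn a {n}ᶜ
  pderiv_eq_zero : ∀ k ≠ n, ∂[k] a 0 = 0

theorem IsTransverse.const_mul (ha : IsTransverse n a) (c : ℂ) :
    IsTransverse n fun θ => c * a θ where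
  contDiffAt := contDiffAt_const.mul ha.contDiffAt
  dependsOn _ _ h := congrArg (c * ·) (ha.dependsOn h)
  pderiv_eq_zero k hk := by simp only [pderiv_const_mul, ha.pderiv_eq_zero k hk, mul_zero]

theorem isTransverse_zero (n : Fin d) : IsTransverse n fun _ => 0 where
  contDiffAt := contDiffAt_const
  dependsOn _ _ _ := rfl
  pderiv_eq_zero k _ := by rw [pderiv_const]

/-- The symbol `z_n a + q + z_n⁻¹ b` along the torus through `p`, as a function of the angles. -/
noncomputable def stepSymbol (n : Fin d) (p : Fin d → ℂ) (a q b : (Fin d → ℝ) → ℂ)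
    (θ : Fin d → ℝ) : ℂ :=
  torusPoint p θ n * a θ + q θ + (torusPoint p θ n)⁻¹ * b θ

theorem stepSymbol_zero : stepSymbol n p a q b 0 = p n * a 0 + q 0 + (p n)⁻¹ * b 0 := by
  rw [stepSymbol, torusPoint_zero]

theorem contDiffAt_stepSymbol (hp : p n ≠ 0) (ha : ContDiffAt ℝ ∞ a 0) (hq : ContDiffAt ℝ ∞ q 0)
    (hb : ContDiffAt ℝ ∞ b 0) : ContDiffAt ℝ ∞ (stepSymbol n p a q b) 0 := by
  have he := (contDiff_torusPoint p n).contDiffAt (x := 0)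
  exact ((he.mul ha).add hq).add ((he.inv (torusPoint_ne_zero hp 0)).mul hb)

theorem pderiv_stepSymbol (hp : p n ≠ 0) (ha : DependsOn a {n}ᶜ)
    (hq : DependsOn q {n}ᶜ) (hb : DependsOn b {n}ᶜ) :
    ∂[n] (stepSymbol n p a q b) =
      stepSymbol n p (fun θ => Complex.I * a θ) (fun _ => 0) (fun θ => -Complex.I * b θ) := by
  funext θ
  have he := hasDerivAt_torusPoint_update p θ n
  have hne := torusPoint_ne_zero hp θ
  have hsymbol := ((he.mul_const (a θ)).add_const (q θ)).add
    ((he.fun_inv (by rwa [update_eq_self])).mul_const (b θ))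
  simp only [pderiv', stepSymbol, apply_update_of_dependsOn_compl ha,
    apply_update_of_dependsOn_compl hq, apply_update_of_dependsOn_compl hb]
  refine hsymbol.deriv.trans ?_
  rw [update_eq_self]
  field_simp
  ring

theorem pderiv_stepSymbol_of_ne (ha : IsTransverse n a) (hq : IsTransverse n q)
    (hb : IsTransverse n b) {k : Fin d} (hk : k ≠ n) : ∂[k] (stepSymbol n p a q b) 0 = 0 := by
  have hderiv {φ : (Fin d → ℝ) → ℂ} (hφ : IsTransverse n φ) :
      HasDerivAt (fun s : ℝ => φ (update 0 k s)) 0 ((0 : Fin d → ℝ) k) :=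
    hφ.pderiv_eq_zero k hk ▸
      hasDerivAt_comp_update_pderiv (hφ.contDiffAt.differentiableAt (by simp)) k
  have hsymbol := (((hderiv ha).const_mul (p n)).add (hderiv hq)).add
    ((hderiv hb).const_mul (p n)⁻¹)
  simp only [mul_zero, add_zero] at hsymbol
  simp only [pderiv', stepSymbol, torusPoint_update_of_ne hk.symm, torusPoint_zero]
  exact hsymbol.deriv

theorem one_sub_eq_pderiv_stepSymbol_mul (hp : p n ≠ 0)
    (ha : DependsOn a {n}ᶜ) (hq : DependsOn q {n}ᶜ)
    (hb : DependsOn b {n}ᶜ) {θ : Fin d → ℝ} (hbθ : b θ ≠ 0) :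
    1 - torusPoint p θ n ^ 2 * a θ / b θ =
      ∂[n] (stepSymbol n p a q b) θ * (Complex.I * torusPoint p θ n * (b θ)⁻¹) := by
  have hne := torusPoint_ne_zero hp θ
  rw [pderiv_stepSymbol hp ha hq hb, stepSymbol]
  field_simp
  linear_combination (torusPoint p θ n ^ 2 * a θ - b θ) * -Complex.I_sq

/-- The cofactor `f` in the factorisation `ũ = ∂ₙσ · f`, where `σ` is the symbol. -/
noncomputable def residualAmplitude (n : Fin d) (p : Fin d → ℂ) (b : (Fin d → ℝ) → ℂ)
    (θ : Fin d → ℝ) : ℂ :=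
  torusPoint p θ n * (1 - torusPoint p θ n)⁻¹ *
    (Complex.I * (∏ j ∈ univ.erase n, (1 + torusPoint p θ j)) * (b θ)⁻¹)

theorem eventuallyEq_pderiv_stepSymbol_mul_residualAmplitude (hp : p n ≠ 0)
    (ha : DependsOn a {n}ᶜ) (hq : DependsOn q {n}ᶜ)
    (hb : DependsOn b {n}ᶜ) (hb_cont : ContinuousAt b 0) (hb₀ : b 0 ≠ 0) :
    (fun θ => (∏ j ∈ univ.erase n, (1 + torusPoint p θ j)) *
        (1 - torusPoint p θ n ^ 2 * a θ / b θ) * (1 - torusPoint p θ n)⁻¹) =ᶠ[𝓝 0]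
      fun θ => ∂[n] (stepSymbol n p a q b) θ * residualAmplitude n p b θ := by
  filter_upwards [hb_cont.eventually_ne hb₀] with θ hbθ
  rw [one_sub_eq_pderiv_stepSymbol_mul hp ha hq hb hbθ, residualAmplitude]
  ring

theorem contDiffAt_residualAmplitude (hp : p n ≠ 1) (hb : ContDiffAt ℝ ∞ b 0) (hb₀ : b 0 ≠ 0) :
    ContDiffAt ℝ ∞ (residualAmplitude n p b) 0 := by
  have htorus (k : Fin d) := (contDiff_torusPoint p k).contDiffAt (x := 0)
  have hne : 1 - torusPoint p 0 n ≠ 0 := by rwa [torusPoint_zero, sub_ne_zero, ne_comm]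
  have hprod : ContDiffAt ℝ ∞ (fun θ => ∏ j ∈ univ.erase n, (1 + torusPoint p θ j)) 0 :=
    contDiffAt_prod fun j _ => contDiffAt_const.add (htorus j)
  exact ((htorus n).mul ((contDiffAt_const.sub (htorus n)).inv hne)).mul
    ((contDiffAt_const.mul hprod).mul (hb.inv hb₀))

theorem pderiv_residualAmplitude (hp : p n ≠ 1) (hb : DependsOn b {n}ᶜ) :
    ∂[n] (residualAmplitude n p b) 0 =
      -(p n * (∏ j ∈ univ.erase n, (1 + p j)) / (b 0 * (1 - p n) ^ 2)) := by
  have he := hasDerivAt_torusPoint_update p 0 n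
  have hne : 1 - p n ≠ 0 := by rwa [sub_ne_zero, ne_comm]
  have hratio := he.mul ((he.const_sub 1).fun_inv (by rwa [update_eq_self, torusPoint_zero]))
  have hratio' : ∂[n] (fun θ => torusPoint p θ n * (1 - torusPoint p θ n)⁻¹) 0 =
      Complex.I * p n / (1 - p n) ^ 2 := by
    refine hratio.deriv.trans ?_
    rw [update_eq_self, torusPoint_zero]
    field_simp
    ring
  have hcofactor : DependsOn
      (fun θ => Complex.I * (∏ j ∈ univ.erase n, (1 + torusPoint p θ j)) * (b θ)⁻¹) {n}ᶜ := by
    intro θ θ' h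
    have hprod : ∏ j ∈ univ.erase n, (1 + torusPoint p θ j) =
        ∏ j ∈ univ.erase n, (1 + torusPoint p θ' j) :=
      prod_congr rfl fun j hj => by simp only [torusPoint, h j (ne_of_mem_erase hj)]
    simp only [hb h, hprod]
  refine (congrFun (pderiv_mul_of_dependsOn_compl hcofactor) 0).trans ?_
  rw [hratio', torusPoint_zero, mul_comm (b 0), ← div_div, ← neg_div, ← neg_div]
  linear_combination p n * (∏ j ∈ univ.erase n, (1 + p j)) / (1 - p n) ^ 2 / b 0 * Complex.I_sq

theorem weightedLaplacian_add_weightedLaplacian_sq_stepSymbol {c : Fin d → ℂ}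
    {g f u : (Fin d → ℝ) → ℂ} (ha : IsTransverse n a) (hq : IsTransverse n q)
    (hb : IsTransverse n b) (hp : p n ≠ 0) (hb₀ : b 0 ≠ 0) (hpab : p n ^ 2 * a 0 = b 0)
    (hσ₀ : stepSymbol n p a q b 0 ≠ 0)
    (hcn : c n = -(stepSymbol n p a q b 0 / 2) * (p n * (b 0)⁻¹))
    (hg : ContDiffAt ℝ ∞ g 0) (hg₀ : g 0 = 0) {K : ℂ}
    (hgσ : ∀ᶠ θ in 𝓝 0, Complex.exp (g θ) * stepSymbol n p a q b θ = K)
    (hf : ContDiffAt ℝ ∞ f 0)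
    (hu : u =ᶠ[𝓝 0] fun θ => ∂[n] (stepSymbol n p a q b) θ * f θ) :
    weightedLaplacian c u 0 +
        weightedLaplacian c (weightedLaplacian c fun θ => u θ * hessianRemainder g θ) 0 / 4 =
      2 * stepSymbol n p a q b 0 * ∂[n] f 0 := by
  have hσn := pderiv_stepSymbol hp ha.dependsOn hq.dependsOn hb.dependsOn
  have haI := ha.const_mul Complex.I
  have hbI := hb.const_mul (-Complex.I)
  have h₀ := isTransverse_zero n
  have hσnn := pderiv_stepSymbol hp haI.dependsOn h₀.dependsOn hbI.dependsOn
  refine weightedLaplacian_add_weightedLaplacian_sq_div_four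
    (contDiffAt_stepSymbol hp ha.contDiffAt hq.contDiffAt hb.contDiffAt) hσ₀ (fun k => ?_)
    (fun k hk => ?_) ?_ hg hg₀ hgσ hf hu
  · by_cases hk : k = n
    · rw [hk, hσn, stepSymbol_zero, ← hpab]
      field_simp
      ring
    · exact pderiv_stepSymbol_of_ne ha hq hb hk
  · rw [hσn]
    exact pderiv_stepSymbol_of_ne haI h₀ hbI hk
  · have hσnn₀ : ∂[n] (∂[n] (stepSymbol n p a q b)) 0 = -(2 * b 0 / p n) := by
      rw [hσn, hσnn, stepSymbol_zero, ← hpab]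
      field_simp
      rw [Complex.I_sq]
      ring
    rw [hcn, hσnn₀]
    field_simp

end StepSymbol

section LaurentSum

variable {d : ℕ} {J : Finset (Fin d)} {T : Finset (Fin d → ℤ)} {w : (Fin d → ℤ) → ℂ}
  {n j : Fin d} {p : Fin d → ℂ}

/-- The Laurent polynomial `∑_{i ∈ T} w_i ∏_{k ∈ J} z_k^{i_k}`, as a function of `z`. -/
noncomputable def laurentSum (J : Finset (Fin d)) (T : Finset (Fin d → ℤ))
    (w : (Fin d → ℤ) → ℂ) (z : Fin d → ℂ) : ℂ :=
  ∑ i ∈ T, w i * ∏ k ∈ J, z k ^ i k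

/-- Symmetry of the weighted step set `(T, w)` under negation of the `j`-th coordinate. -/
def IsSymmetricAlong (j : Fin d) (T : Finset (Fin d → ℤ)) (w : (Fin d → ℤ) → ℂ) : Prop :=
  ∀ i ∈ T, update i j (-(i j)) ∈ T ∧ w (update i j (-(i j))) = w i

theorem IsSymmetricAlong.filter_apply_eq (h : IsSymmetricAlong j T w) (hj : j ≠ n) (r : ℤ) :
    IsSymmetricAlong j (T.filter fun i => i n = r) w := by
  intro i hi
  rw [mem_filter] at hi ⊢
  rw [update_of_ne hj.symm]
  exact ⟨⟨(h i hi.1).1, hi.2⟩, (h i hi.1).2⟩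

theorem prod_update_inv_zpow {ι G : Type*} [DecidableEq ι] [DivisionCommMonoid G]
    (J : Finset ι) (z : ι → G) (i : ι → ℤ) (j : ι) :
    ∏ k ∈ J, update z j (z j)⁻¹ k ^ i k = ∏ k ∈ J, z k ^ update i j (-(i j)) k := by
  refine prod_congr rfl fun k _ => ?_
  by_cases hk : k = j
  · subst hk
    simp only [update_self, inv_zpow']
  · simp only [update_of_ne hk]

theorem laurentSum_update_inv (h : IsSymmetricAlong j T w) (J : Finset (Fin d))
    (z : Fin d → ℂ) : laurentSum J T w (update z j (z j)⁻¹) = laurentSum J T w z := by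
  have hinvol (i : Fin d → ℤ) :
      update (update i j (-(i j))) j (-(update i j (-(i j)) j)) = i := by simp
  refine sum_nbij' (fun i => update i j (-(i j))) (fun i => update i j (-(i j)))
    (fun i hi => (h i hi).1) (fun i hi => (h i hi).1) (fun i _ => hinvol i)
    (fun i _ => hinvol i) (fun i hi => ?_)
  rw [prod_update_inv_zpow, (h i hi).2]

theorem contDiff_laurentSum_torusPoint (J : Finset (Fin d)) (T : Finset (Fin d → ℤ))
    (w : (Fin d → ℤ) → ℂ) (p : Fin d → ℂ) :
    ContDiff ℝ ∞ fun θ => laurentSum J T w (torusPoint p θ) :=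
  ContDiff.sum fun i _ => contDiff_const.mul
    (contDiff_prod fun k _ => contDiff_torusPoint_zpow p k (i k))

theorem dependsOn_laurentSum_torusPoint (J : Finset (Fin d)) (T : Finset (Fin d → ℤ))
    (w : (Fin d → ℤ) → ℂ) (p : Fin d → ℂ) :
    DependsOn (fun θ => laurentSum J T w (torusPoint p θ)) J := fun _ _ h =>
  sum_congr rfl fun i _ => congrArg (w i * ·) <| prod_congr rfl fun k hk => by
    simp only [torusPoint, h k hk]

theorem isTransverse_laurentSum_filter (hn : n ∉ J) (hp : ∀ j ≠ n, p j = 1 ∨ p j = -1)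
    (hT : ∀ j ≠ n, IsSymmetricAlong j T w) (r : ℤ) :
    IsTransverse n fun θ => laurentSum J (T.filter fun i => i n = r) w (torusPoint p θ) where
  contDiffAt := (contDiff_laurentSum_torusPoint ..).contDiffAt
  dependsOn := (dependsOn_laurentSum_torusPoint ..).mono
    (Set.subset_compl_singleton_iff.mpr hn)
  pderiv_eq_zero j hj := pderiv_zero_eq_zero_of_even fun s => by
    rw [torusPoint_update_neg (hp j hj), laurentSum_update_inv ((hT j hj).filter_apply_eq hj r)]

end LaurentSum

theorem prod_one_add_mul_sum_one_sub_eq_zero {ι R : Type*} [CommRing R]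
    {s : Finset ι} {p : ι → R} (hp : ∀ j ∈ s, p j = 1 ∨ p j = -1) (r : ι → R) :
    (∏ j ∈ s, (1 + p j)) * ∑ j ∈ s, (1 - p j) * r j = 0 := by
  rw [mul_sum]
  refine sum_eq_zero fun j hj => ?_
  rcases hp j hj with h | h
  · rw [h, sub_self, zero_mul, mul_zero]
  · rw [prod_eq_zero hj (by rw [h, add_neg_cancel]), zero_mul]

/-- The numbers `β j`, `α' j`, `β' j` stand for the values `B_j(p)`, `A'_j(p)`, `B'_j(p)`. -/
theorem negative_drift_constant_simplification_general {d : ℕ} (n : Fin d)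
    {A Q B S : (Fin d → ℂ) → ℂ} {p : Fin d → ℂ}
    (hA : IsTransverse n fun θ => A (torusPoint p θ))
    (hQ : IsTransverse n fun θ => Q (torusPoint p θ))
    (hB : IsTransverse n fun θ => B (torusPoint p θ))
    (hS : ∀ z, S z = z n * A z + Q z + (z n)⁻¹ * B z)
    (hpj : ∀ j ≠ n, p j = 1 ∨ p j = -1) (hp₀ : p n ≠ 0) (hp₁ : p n ≠ 1)
    (hpn : p n ^ 2 = B p / A p) (hpS : S p ≠ 0) (β α' β' : Fin d → ℂ)
    {u g gbar : (Fin d → ℝ) → ℂ}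
    (hu : ∀ θ, u θ = (∏ j ∈ univ.erase n, (1 + p j * Complex.exp (Complex.I * (θ j : ℂ)))) *
      (1 - p n ^ 2 * Complex.exp (2 * Complex.I * (θ n : ℂ)) *
        A (torusPoint p θ) / B (torusPoint p θ)) *
      (1 - p n * Complex.exp (Complex.I * (θ n : ℂ)))⁻¹)
    (hg : ContDiffAt ℝ ∞ g 0) (hg₀ : g 0 = 0)
    (hgS : ∀ᶠ θ in 𝓝 0, Complex.exp (g θ) * S (torusPoint p θ) = S p)
    (hgbar : ∀ θ, gbar θ = hessianRemainder g θ)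
    {H : ((Fin d → ℝ) → ℂ) → (Fin d → ℝ) → ℂ}
    (hH : ∀ f θ, H f θ = -(S p / 2) * ((∑ j ∈ univ.erase n, (p j * β j)⁻¹ * ∂[j] (∂[j] f) θ) +
      p n * (B p)⁻¹ * ∂[n] (∂[n] f) θ)) :
    -(1 / 2) * (H u 0 + H (H fun θ => u θ * gbar θ) 0 / 4) =
      (S p * (∏ j ∈ univ.erase n, (1 + p j)) / (1 - p n)) *
        (1 / (A p * p n * (1 - p n)) +
          ∑ j ∈ univ.erase n, (1 - p j) / (2 * p j * β j) * (α' j / A p - β' j / B p)) := by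
  obtain ⟨hB₀, hA₀⟩ : B p ≠ 0 ∧ A p ≠ 0 := div_ne_zero_iff.mp (hpn ▸ pow_ne_zero 2 hp₀)
  have hBA : p n ^ 2 * A p = B p := by rw [hpn, div_mul_cancel₀ _ hA₀]
  have hσ (z : Fin d → ℝ) : S (torusPoint p z) = stepSymbol n p (fun θ => A (torusPoint p θ))
      (fun θ => Q (torusPoint p θ)) (fun θ => B (torusPoint p θ)) z := hS _
  have hSp := hσ 0
  rw [torusPoint_zero] at hSp
  have hb₀ : B (torusPoint p 0) ≠ 0 := by rwa [torusPoint_zero]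
  let c (k : Fin d) : ℂ := -(S p / 2) * if k = n then p n * (B p)⁻¹ else (p k * β k)⁻¹
  have hHc : H = weightedLaplacian c := by
    funext f θ
    rw [hH, weightedLaplacian_mul_ite]
  have hfactor := eventuallyEq_pderiv_stepSymbol_mul_residualAmplitude hp₀ hA.dependsOn hQ.dependsOn
    hB.dependsOn hB.contDiffAt.continuousAt hb₀
  simp only [torusPoint_sq] at hfactor
  have hcancel := weightedLaplacian_add_weightedLaplacian_sq_stepSymbol (c := c) (u := u)
    hA hQ hB hp₀ hb₀ (by rwa [torusPoint_zero]) (hSp ▸ hpS)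
    (by rw [← hSp, torusPoint_zero]; simp only [c, if_true]) hg hg₀ (K := S p)
    (by simpa only [hσ] using hgS) (contDiffAt_residualAmplitude hp₁ hB.contDiffAt hb₀)
    (EventuallyEq.trans (.of_forall hu) hfactor)
  have hne : 1 - p n ≠ 0 := by rwa [sub_ne_zero, ne_comm]
  have hsum := prod_one_add_mul_sum_one_sub_eq_zero (s := univ.erase n)
    (fun j hj => hpj j (ne_of_mem_erase hj))
    fun j => (2 * p j * β j)⁻¹ * (α' j / A p - β' j / B p)
  simp only [← mul_assoc, ← div_eq_mul_inv] at hsum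
  have hcorrection : (S p * (∏ j ∈ univ.erase n, (1 + p j)) / (1 - p n)) *
      ∑ j ∈ univ.erase n, (1 - p j) / (2 * p j * β j) * (α' j / A p - β' j / B p) = 0 := by
    rw [mul_div_right_comm, mul_assoc, hsum, mul_zero]
  simp only [hgbar, hHc, hcancel, ← hSp, pderiv_residualAmplitude hp₁ hB.dependsOn, torusPoint_zero]
  rw [mul_add, hcorrection, add_zero, ← hBA]
  field_simp

theorem val_lt_pred_iff_ne {d : ℕ} (hd : d - 1 < d) (j : Fin d) :
    (j : ℕ) < d - 1 ↔ j ≠ ⟨d - 1, hd⟩ := by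
  simp only [ne_eq, Fin.ext_iff]
  omega

theorem negative_drift_constant_simplification
    (d : ℕ) (hd : 2 ≤ d)
    (S : Finset (Fin d → ℤ)) (w : (Fin d → ℤ) → ℝ)
    -- steps lie in {-1,0,1}^d \ {0}
    (hSsmall : ∀ i ∈ S, (∀ m : Fin d, i m = -1 ∨ i m = 0 ∨ i m = 1) ∧ i ≠ 0)
    -- nonnegative weights
    (hw : ∀ i ∈ S, 0 ≤ w i)
    -- symmetry of the weighting over each of the first d-1 axes
    (hsym : ∀ j : Fin d, (j : ℕ) < d - 1 → ∀ i ∈ S,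
      Function.update i j (-(i j)) ∈ S ∧ w (Function.update i j (-(i j))) = w i)
    -- a positively weighted step forwards and backwards in each coordinate
    (hfb : ∀ j : Fin d, (∃ i ∈ S, i j = 1 ∧ 0 < w i) ∧ (∃ i ∈ S, i j = -1 ∧ 0 < w i))
    -- the Laurent polynomial functions A, Q, B in z_1, …, z_{d-1}
    (AC QC BC : (Fin d → ℂ) → ℂ)
    (hAC : ∀ z, AC z = ∑ i ∈ S.filter (fun i => i ⟨d - 1, by omega⟩ = -1),
      (w i : ℂ) * ∏ k ∈ Finset.univ.filter (fun k : Fin d => (k : ℕ) < d - 1), z k ^ (i k))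
    (hQC : ∀ z, QC z = ∑ i ∈ S.filter (fun i => i ⟨d - 1, by omega⟩ = 0),
      (w i : ℂ) * ∏ k ∈ Finset.univ.filter (fun k : Fin d => (k : ℕ) < d - 1), z k ^ (i k))
    (hBC : ∀ z, BC z = ∑ i ∈ S.filter (fun i => i ⟨d - 1, by omega⟩ = 1),
      (w i : ℂ) * ∏ k ∈ Finset.univ.filter (fun k : Fin d => (k : ℕ) < d - 1), z k ^ (i k))
    -- S̄(z) = z_d A + Q + z_d⁻¹ B
    (Sbar : (Fin d → ℂ) → ℂ)
    (hSbar : ∀ z, Sbar z =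
      z ⟨d - 1, by omega⟩ * AC z + QC z + (z ⟨d - 1, by omega⟩)⁻¹ * BC z)
    -- B_j with S̄ = (z_j + z_j⁻¹) B_j + Q_j, B_j and Q_j not involving z_j
    (Bj Qj : Fin d → ((Fin d → ℂ) → ℂ))
    (hBjind : ∀ j : Fin d, (j : ℕ) < d - 1 → ∀ z c,
      Bj j (Function.update z j c) = Bj j z)
    (hQjind : ∀ j : Fin d, (j : ℕ) < d - 1 → ∀ z c,
      Qj j (Function.update z j c) = Qj j z)
    (hBjQj : ∀ j : Fin d, (j : ℕ) < d - 1 → ∀ z : Fin d → ℂ, (∀ k, z k ≠ 0) →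
      Sbar z = (z j + (z j)⁻¹) * Bj j z + Qj j z)
    -- A'_j, A''_j, B'_j, B''_j, not involving z_j or z_d
    (A' A'' B' B'' : Fin d → ((Fin d → ℂ) → ℂ))
    (hA'ind : ∀ j : Fin d, (j : ℕ) < d - 1 → ∀ z c,
      A' j (Function.update z j c) = A' j z ∧
      A' j (Function.update z ⟨d - 1, by omega⟩ c) = A' j z)
    (hA''ind : ∀ j : Fin d, (j : ℕ) < d - 1 → ∀ z c,
      A'' j (Function.update z j c) = A'' j z ∧
      A'' j (Function.update z ⟨d - 1, by omega⟩ c) = A'' j z)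
    (hB'ind : ∀ j : Fin d, (j : ℕ) < d - 1 → ∀ z c,
      B' j (Function.update z j c) = B' j z ∧
      B' j (Function.update z ⟨d - 1, by omega⟩ c) = B' j z)
    (hB''ind : ∀ j : Fin d, (j : ℕ) < d - 1 → ∀ z c,
      B'' j (Function.update z j c) = B'' j z ∧
      B'' j (Function.update z ⟨d - 1, by omega⟩ c) = B'' j z)
    (hAdec : ∀ j : Fin d, (j : ℕ) < d - 1 → ∀ z : Fin d → ℂ, (∀ k, z k ≠ 0) →
      AC z = (z j + (z j)⁻¹) * A' j z + A'' j z)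
    (hBdec : ∀ j : Fin d, (j : ℕ) < d - 1 → ∀ z : Fin d → ℂ, (∀ k, z k ≠ 0) →
      BC z = (z j + (z j)⁻¹) * B' j z + B'' j z)
    -- the point p
    (p : Fin d → ℂ)
    (hpj : ∀ j : Fin d, (j : ℕ) < d - 1 → (p j = 1 ∨ p j = -1))
    (hpd0 : p ⟨d - 1, by omega⟩ ≠ 0) (hpd1 : p ⟨d - 1, by omega⟩ ≠ 1)
    (hpA : AC p ≠ 0) (hpB : BC p ≠ 0)
    (hpd : (p ⟨d - 1, by omega⟩) ^ 2 = BC p / AC p)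
    (hpS : Sbar p ≠ 0)
    (hpBj : ∀ j : Fin d, (j : ℕ) < d - 1 → p j * Bj j p ≠ 0)
    -- the function ũ
    (ut : (Fin d → ℝ) → ℂ)
    (hut : ∀ θ : Fin d → ℝ, ut θ =
      (∏ j ∈ Finset.univ.filter (fun j : Fin d => (j : ℕ) < d - 1),
        (1 + p j * Complex.exp (Complex.I * (θ j : ℂ)))) *
      (1 - (p ⟨d - 1, by omega⟩) ^ 2 *
          Complex.exp (2 * Complex.I * (θ ⟨d - 1, by omega⟩ : ℂ)) *
          AC (fun k => p k * Complex.exp (Complex.I * (θ k : ℂ))) /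
          BC (fun k => p k * Complex.exp (Complex.I * (θ k : ℂ)))) *
      (1 - p ⟨d - 1, by omega⟩ * Complex.exp (Complex.I * (θ ⟨d - 1, by omega⟩ : ℂ)))⁻¹)
    -- the function g̃: a branch of log S̄(p) - log S̄(p e^{iθ}) with g̃(0) = 0
    (U : Set (Fin d → ℝ)) (hU : IsOpen U) (h0 : (0 : Fin d → ℝ) ∈ U)
    (gt : (Fin d → ℝ) → ℂ)
    (hgt0 : gt 0 = 0)
    (hgtsm : ContDiffOn ℝ (⊤ : ℕ∞) gt U)
    (hgt : ∀ θ ∈ U, Complex.exp (gt θ) *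
      Sbar (fun k => p k * Complex.exp (Complex.I * (θ k : ℂ))) = Sbar p)
    -- g̲̃(θ) = g̃(θ) - (1/2) θᵀ g̃''(0) θ
    (gbar : (Fin d → ℝ) → ℂ)
    (hgbar : ∀ θ, gbar θ = gt θ -
      (1 / 2) * ∑ a : Fin d, ∑ b : Fin d,
        (θ a : ℂ) * pderiv' d a (pderiv' d b gt) 0 * (θ b : ℂ))
    -- the operator ℋ
    (Hop : ((Fin d → ℝ) → ℂ) → ((Fin d → ℝ) → ℂ))
    (hHop : ∀ f z, Hop f z = -(Sbar p / 2) *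
      ((∑ j ∈ Finset.univ.filter (fun j : Fin d => (j : ℕ) < d - 1),
          (p j * Bj j p)⁻¹ * pderiv' d j (pderiv' d j f) z)
        + p ⟨d - 1, by omega⟩ * (BC p)⁻¹ *
            pderiv' d ⟨d - 1, by omega⟩ (pderiv' d ⟨d - 1, by omega⟩ f) z)) :
    -(1 / 2) * ((Hop ut) 0 + (Hop (Hop (fun θ => ut θ * gbar θ))) 0 / 4) =
      (Sbar p * (∏ j ∈ Finset.univ.filter (fun j : Fin d => (j : ℕ) < d - 1), (1 + p j))
          / (1 - p ⟨d - 1, by omega⟩)) *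
      (1 / (AC p * p ⟨d - 1, by omega⟩ * (1 - p ⟨d - 1, by omega⟩))
        + ∑ j ∈ Finset.univ.filter (fun j : Fin d => (j : ℕ) < d - 1),
            (1 - p j) / (2 * p j * Bj j p) * (A' j p / AC p - B' j p / BC p)) := by
  obtain rfl := funext hAC
  obtain rfl := funext hQC
  obtain rfl := funext hBC
  have hd₁ : d - 1 < d := by omega
  simp only [val_lt_pred_iff_ne hd₁, filter_ne'] at *
  have hcoeff := isTransverse_laurentSum_filter (w := fun i => (w i : ℂ)) (notMem_erase _ univ) hpj
    fun j hj i hi => ⟨(hsym j hj i hi).1, congrArg _ (hsym j hj i hi).2⟩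
  exact negative_drift_constant_simplification_general ⟨d - 1, hd₁⟩ (hcoeff (-1)) (hcoeff 0)
    (hcoeff 1) hSbar hpj hpd0 hpd1 hpd hpS (fun j => Bj j p) (fun j => A' j p) (fun j => B' j p)
    hut (hgtsm.contDiffAt (hU.mem_nhds h0)) hgt0 (mem_of_superset (hU.mem_nhds h0) hgt) hgbar hHop
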